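/- In the k-block finite pool-based AL model, let b > 0 and n be a positive integer with |𝒯| ≤ e^{b·n}, let ε ∈ [0,1], and suppose P[ 𝖽_k(W^k,H) > d ] ≤ ε. Then for every γ ≥ 0, ε ≥ P[ j_k(W^k,U^k,H) ≥ b·n + γ ] − e^{−γ}. -/

import Mathlib

open scoped BigOperators

/-- Change of measure: the expected likelihood ratio between a kernel `Q` from `H` and the
marginal of `U` is at most the number of values of the intermediate variable `T`. -/
theorem sum_likelihoodRatio_mul_joint_le_card
    {α β τ η : Type*} [Fintype α] [Fintype β] [Fintype τ] [Fintype η]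
    (M : α → β → ℝ) (hM : ∀ a u, 0 ≤ M a u)
    (PT : β → τ → ℝ) (hPT0 : ∀ u t, 0 ≤ PT u t) (hPT1 : ∀ u, ∑ t, PT u t = 1)
    (PH : τ → η → ℝ) (hPH0 : ∀ t h, 0 ≤ PH t h) (hPH1 : ∀ t, ∑ h, PH t h = 1)
    (Q : η → β → ℝ) (hQ0 : ∀ h u, 0 ≤ Q h u) (hQ1 : ∀ h, ∑ u, Q h u = 1) :
    ∑ a, ∑ u, ∑ t, ∑ h, Q h u / (∑ a', M a' u) * (M a u * PT u t * PH t h)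
      ≤ Fintype.card τ := by
  have hPT_le : ∀ u t, PT u t ≤ 1 := fun u t => by
    rw [← hPT1 u]
    exact Finset.single_le_sum (fun t _ => hPT0 u t) (Finset.mem_univ t)
  calc ∑ a, ∑ u, ∑ t, ∑ h, Q h u / (∑ a', M a' u) * (M a u * PT u t * PH t h)
      = ∑ u, ∑ t, ∑ h, Q h u / (∑ a', M a' u) * (∑ a, M a u) * PT u t * PH t h := by
        rw [Finset.sum_comm]
        refine Finset.sum_congr rfl fun u _ => ?_
        rw [Finset.sum_comm]
        refine Finset.sum_congr rfl fun t _ => ?_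
        rw [Finset.sum_comm]
        refine Finset.sum_congr rfl fun h _ => ?_
        rw [← Finset.mul_sum, ← Finset.sum_mul, ← Finset.sum_mul]
        ring
    _ ≤ ∑ u, ∑ t, ∑ h, Q h u * PH t h := by
        gcongr with u _ t _ h _
        · exact hPH0 t h
        · calc Q h u / (∑ a', M a' u) * (∑ a, M a u) * PT u t
              ≤ Q h u * 1 := by
                gcongr
                · exact hPT0 u t
                · exact hQ0 h u
                · exact mul_le_of_le_div₀ (hQ0 h u) (Finset.sum_nonneg fun a _ => hM a u) le_rfl
                · exact hPT_le u t
            _ = Q h u := mul_one _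
    _ = ∑ t : τ, ∑ h, (∑ u, Q h u) * PH t h := by
        rw [Finset.sum_comm]
        refine Finset.sum_congr rfl fun t _ => ?_
        rw [Finset.sum_comm]
        simp only [Finset.sum_mul]
    _ = Fintype.card τ := by simp [hQ1, hPH1]

/-- Pointwise form of the converse: a mass `x` on which the tilted information reaches `c` either
has excess distortion or is dominated by the likelihood ratio `r` scaled by `exp (-c)`. -/
theorem ite_tilted_le_ite_excess_add {c r s D d x : ℝ} (hc : 0 < c) (hr : 0 ≤ r) (hs : 0 ≤ s)
    (hx : 0 ≤ x) :
    (if c ≤ Real.log r + s * (D - d) then x else 0)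
      ≤ (if d < D then x else 0) + Real.exp (-c) * (r * x) := by
  have hnonneg : 0 ≤ Real.exp (-c) * (r * x) := by positivity
  split_ifs with hA hB hB
  · linarith
  · have hlog : c ≤ Real.log r := by
      nlinarith [mul_nonneg hs (sub_nonneg.mpr (not_lt.mp hB))]
    have hr' : 0 < r := hr.lt_of_ne fun h => by
      rw [← h, Real.log_zero] at hlog
      linarith
    have hexp : Real.exp c ≤ r := (Real.le_log_iff_exp_le hr').mp hlog
    calc x = Real.exp (-c) * (Real.exp c * x) := by
            rw [← mul_assoc, ← Real.exp_add]
            simp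
      _ ≤ 0 + Real.exp (-c) * (r * x) := by
            rw [zero_add]
            gcongr
  · linarith
  · linarith

/-- **Converse bound on the excess-distortion probability in the `k`-block finite
pool-based AL model.**

`k`-block model: `W^k = (W_1,…,W_k)` i.i.d. with pmf `PW`; given `W^k` the pools
`U^k = (U_1,…,U_k)` are conditionally independent with `U_i ∼ PU (W_i)`; a data
selection kernel `PT` from `𝒰^k` to `𝒯` and a learning kernel `PH` from `𝒯` to `ℋ`,
so the joint law of `(W^k,U^k,T,H)` is
`(∏ i, PW (w i) * PU (w i) (u i)) * PT u t * PH t h`.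
Block distortion `dst_k (w,h) = (1/k) ∑ i, dst (w i) h`; block tilted information
`j_k(w,u,h) = log (Qk h u / P_{U^k} u) + lam * k * (dst_k (w,h) - d)` for a kernel
`Qk : ℋ → 𝒰^k` and `lam ≥ 0`, where `P_{U^k} u = ∑ w, ∏ i, PW (w i) * PU (w i) (u i)`.

If `|𝒯| ≤ exp (b*n)` and `P[dst_k (W^k,H) > d] ≤ ε`, then for every `γ ≥ 0`,
`ε ≥ P[ j_k(W^k,U^k,H) ≥ b*n + γ ] - exp (-γ)`. -/
theorem excess_distortion_converse_block
    {𝒲 𝒰 𝒯 ℋ : Type*} [Fintype 𝒲] [Nonempty 𝒲] [Fintype 𝒰] [Nonempty 𝒰]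
    [Fintype 𝒯] [Nonempty 𝒯] [Fintype ℋ] [Nonempty ℋ]
    (k : ℕ) (hk : 0 < k)
    (PW : 𝒲 → ℝ) (hPW0 : ∀ w, 0 ≤ PW w) (hPW1 : ∑ w, PW w = 1)
    (PU : 𝒲 → 𝒰 → ℝ) (hPU0 : ∀ w u, 0 ≤ PU w u) (hPU1 : ∀ w, ∑ u, PU w u = 1)
    (PT : (Fin k → 𝒰) → 𝒯 → ℝ) (hPT0 : ∀ u t, 0 ≤ PT u t) (hPT1 : ∀ u, ∑ t, PT u t = 1)
    (PH : 𝒯 → ℋ → ℝ) (hPH0 : ∀ t h, 0 ≤ PH t h) (hPH1 : ∀ t, ∑ h, PH t h = 1)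
    (dst : 𝒲 → ℋ → ℝ) (hdst : ∀ w h, 0 ≤ dst w h) (d : ℝ) (hd : 0 ≤ d)
    (lam : ℝ) (hlam : 0 ≤ lam)
    (Qk : ℋ → (Fin k → 𝒰) → ℝ) (hQ0 : ∀ h u, 0 ≤ Qk h u) (hQ1 : ∀ h, ∑ u, Qk h u = 1)
    (b : ℝ) (hb : 0 < b) (n : ℕ) (hn : 0 < n)
    (hcard : (Fintype.card 𝒯 : ℝ) ≤ Real.exp (b * n))
    (ε : ℝ) (hε0 : 0 ≤ ε) (hε1 : ε ≤ 1)
    (hexcess : (∑ w : Fin k → 𝒲, ∑ u : Fin k → 𝒰, ∑ t, ∑ h,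
        if d < (1 / (k : ℝ)) * ∑ i, dst (w i) h
        then (∏ i, PW (w i) * PU (w i) (u i)) * PT u t * PH t h else 0) ≤ ε) :
    ∀ γ : ℝ, 0 ≤ γ →
      (∑ w : Fin k → 𝒲, ∑ u : Fin k → 𝒰, ∑ t, ∑ h,
        if b * n + γ ≤
            Real.log (Qk h u / ∑ w' : Fin k → 𝒲, ∏ i, PW (w' i) * PU (w' i) (u i))
              + lam * k * ((1 / (k : ℝ)) * (∑ i, dst (w i) h) - d)
        then (∏ i, PW (w i) * PU (w i) (u i)) * PT u t * PH t h else 0)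
        - Real.exp (-γ) ≤ ε := by
  intro γ hγ
  have hc : 0 < b * n + γ := by positivity
  have hM : ∀ (w : Fin k → 𝒲) (u : Fin k → 𝒰), 0 ≤ ∏ i, PW (w i) * PU (w i) (u i) :=
    fun w u => Finset.prod_nonneg fun i _ => mul_nonneg (hPW0 _) (hPU0 _ _)
  have hcom := sum_likelihoodRatio_mul_joint_le_card
    (fun (w : Fin k → 𝒲) (u : Fin k → 𝒰) => ∏ i, PW (w i) * PU (w i) (u i)) hM
    PT hPT0 hPT1 PH hPH0 hPH1 Qk hQ0 hQ1
  have hpt := Finset.sum_le_sum fun (w : Fin k → 𝒲) (_ : w ∈ Finset.univ) =>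
    Finset.sum_le_sum fun (u : Fin k → 𝒰) (_ : u ∈ Finset.univ) =>
    Finset.sum_le_sum fun (t : 𝒯) (_ : t ∈ Finset.univ) =>
    Finset.sum_le_sum fun (h : ℋ) (_ : h ∈ Finset.univ) =>
    ite_tilted_le_ite_excess_add (D := (1 / (k : ℝ)) * ∑ i, dst (w i) h) (d := d) hc
      (div_nonneg (hQ0 h u) (Finset.sum_nonneg fun w' (_ : w' ∈ Finset.univ) => hM w' u))
      (mul_nonneg hlam k.cast_nonneg)
      (mul_nonneg (mul_nonneg (hM w u) (hPT0 u t)) (hPH0 t h))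
  simp only [Finset.sum_add_distrib, ← Finset.mul_sum] at hpt
  have hscale : Real.exp (-(b * n + γ)) * Fintype.card 𝒯 ≤ Real.exp (-γ) :=
    calc Real.exp (-(b * n + γ)) * Fintype.card 𝒯
        ≤ Real.exp (-(b * n + γ)) * Real.exp (b * n) := by gcongr
      _ = Real.exp (-γ) := by
          rw [← Real.exp_add]
          congr 1
          ring
  have hbound := (mul_le_mul_of_nonneg_left hcom (Real.exp_pos (-(b * n + γ))).le).trans hscale
  linarith
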